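/- The fundamental group of the topological space ∂Ξ ⊆ ℂ³ (the full boundary of the crown domain of SO_e(1,2)/SO(2)) is isomorphic to ℤ. -/

import Mathlib

open Matrix

/-- `Q(z) = z₀² - z₁² - z₂²` on `ℂ³`. -/
def Qc (z : Fin 3 → ℂ) : ℂ := z 0 ^ 2 - z 1 ^ 2 - z 2 ^ 2

/-- `Q(y) = y₀² - y₁² - y₂²` on `ℝ³`. -/
def Qr (y : Fin 3 → ℝ) : ℝ := y 0 ^ 2 - y 1 ^ 2 - y 2 ^ 2

/-- The semisimple boundary part `∂ₛΞ = {iy : y ∈ ℝ³, Q(y) = -1}`. -/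
def bdS : Set (Fin 3 → ℂ) :=
  {z | ∃ y : Fin 3 → ℝ, (∀ j, z j = Complex.I * (y j : ℂ)) ∧ Qr y = -1}

/-- The nilpotent boundary part `∂ₙΞ = {x + iy : Q(x+iy) = 1, x₀ > 0, Q(x) = 0}`. -/
def bdN : Set (Fin 3 → ℂ) :=
  {z | Qc z = 1 ∧ 0 < (z 0).re ∧ Qr (fun j => (z j).re) = 0}

/-- The point `z₁ = (0,0,i)`. -/
noncomputable def z1pt : Fin 3 → ℂ := ![0, 0, Complex.I]

lemma z1pt_mem : z1pt ∈ bdS ∪ bdN := by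
  left
  refine ⟨![0, 0, 1], ?_, ?_⟩
  · intro j
    fin_cases j <;> simp [z1pt]
  · simp [Qr]

lemma mem_bd_iff (z : Fin 3 → ℂ) : z ∈ bdS ∪ bdN ↔
    (z 0).re ^ 2 - (z 1).re ^ 2 - (z 2).re ^ 2 = 0 ∧ 0 ≤ (z 0).re ∧
    (z 0).im ^ 2 - (z 1).im ^ 2 - (z 2).im ^ 2 = -1 ∧
    (z 0).re * (z 0).im - (z 1).re * (z 1).im - (z 2).re * (z 2).im = 0 := by
  constructor
  · rintro (⟨y, hy, hq⟩ | ⟨h1, h2, h3⟩)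
    · simp only [Qr] at hq
      simp [hy, hq]
    · simp only [Qr] at h3
      have hre := congrArg Complex.re h1
      have him := congrArg Complex.im h1
      simp [Qc, pow_two] at hre him
      refine ⟨h3, h2.le, by nlinarith, by nlinarith⟩
  · rintro ⟨h1, h2, h3, h4⟩
    rcases h2.eq_or_lt with h0 | h0
    · left
      have a1 : (z 1).re = 0 := by rw [← h0] at h1; nlinarith [sq_nonneg (z 1).re, sq_nonneg (z 2).re]
      have a2 : (z 2).re = 0 := by rw [← h0] at h1; nlinarith [sq_nonneg (z 1).re, sq_nonneg (z 2).re]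
      refine ⟨fun j => (z j).im, ?_, h3⟩
      intro j
      fin_cases j <;> apply Complex.ext <;> simp [← h0, a1, a2]
    · right
      refine ⟨?_, h0, h1⟩
      apply Complex.ext
      · simp [Qc, pow_two]; nlinarith
      · simp [Qc, pow_two]; nlinarith

noncomputable def bdMk (x y : Fin 3 → ℝ) : Fin 3 → ℂ := fun j => ⟨x j, y j⟩

lemma continuous_bdMk {X : Type*} [TopologicalSpace X] {f g : X → Fin 3 → ℝ}
    (hf : Continuous f) (hg : Continuous g) : Continuous fun a => bdMk (f a) (g a) := by
  refine continuous_pi fun j => ?_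
  have : (fun a => bdMk (f a) (g a) j) = fun a => ((f a j : ℂ) + (g a j : ℂ) * Complex.I) := by
    funext a; apply Complex.ext <;> simp [bdMk]
  rw [this]
  fun_prop

noncomputable def bdRad (z : Fin 3 → ℂ) : ℝ := Real.sqrt (1 + (z 0).im ^ 2)

lemma bdRad_pos (z : Fin 3 → ℂ) : 0 < bdRad z := Real.sqrt_pos.2 (by positivity)

lemma bdRad_sq (z : Fin 3 → ℂ) : bdRad z ^ 2 = 1 + (z 0).im ^ 2 := Real.sq_sqrt (by positivity)

lemma continuous_bdRad : Continuous bdRad := by unfold bdRad; fun_prop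

lemma cont_bdIm {X : Type*} [TopologicalSpace X] {f : X → ↥(bdS ∪ bdN)} (hf : Continuous f)
    (j : Fin 3) : Continuous fun a => ((f a).1 j).im :=
  Complex.continuous_im.comp ((continuous_apply j).comp (continuous_subtype_val.comp hf))

lemma cont_bdRe {X : Type*} [TopologicalSpace X] {f : X → ↥(bdS ∪ bdN)} (hf : Continuous f)
    (j : Fin 3) : Continuous fun a => ((f a).1 j).re :=
  Complex.continuous_re.comp ((continuous_apply j).comp (continuous_subtype_val.comp hf))

/-- The angle map to the circle. -/
noncomputable def bdToCircle : C(↥(bdS ∪ bdN), Circle) where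
  toFun z := ⟨⟨(z.1 1).im / bdRad z.1, (z.1 2).im / bdRad z.1⟩, by
    rw [show _ ∈ Submonoid.unitSphere ℂ ↔ _ from mem_sphere_zero_iff_norm, ← sq_eq_sq₀ (norm_nonneg _) zero_le_one, ← Complex.normSq_eq_norm_sq]
    have h := ((mem_bd_iff z.1).1 z.2).2.2.1
    have hr := bdRad_pos z.1
    have hs := bdRad_sq z.1
    simp only [Complex.normSq_mk]
    field_simp
    linarith⟩
  continuous_toFun := by
    refine Continuous.subtype_mk ?_ _
    have : (fun z : ↥(bdS ∪ bdN) => (⟨(z.1 1).im / bdRad z.1, (z.1 2).im / bdRad z.1⟩ : ℂ)) =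
      fun z => (((z.1 1).im / bdRad z.1 : ℝ) : ℂ) + (((z.1 2).im / bdRad z.1 : ℝ) : ℂ) * Complex.I := by
      funext a; apply Complex.ext <;> simp
    rw [this]
    have h1 : Continuous fun z : ↥(bdS ∪ bdN) => (z.1 1).im / bdRad z.1 :=
      Continuous.div (cont_bdIm continuous_id _) (continuous_bdRad.comp continuous_subtype_val)
        (fun z => (bdRad_pos _).ne')
    have h2 : Continuous fun z : ↥(bdS ∪ bdN) => (z.1 2).im / bdRad z.1 :=
      Continuous.div (cont_bdIm continuous_id _) (continuous_bdRad.comp continuous_subtype_val)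
        (fun z => (bdRad_pos _).ne')
    fun_prop

lemma bdToCircle_re (z : ↥(bdS ∪ bdN)) :
    ((bdToCircle z : Circle) : ℂ).re = (z.1 1).im / bdRad z.1 := rfl

lemma bdToCircle_im (z : ↥(bdS ∪ bdN)) :
    ((bdToCircle z : Circle) : ℂ).im = (z.1 2).im / bdRad z.1 := rfl

noncomputable def circleToBd : C(Circle, ↥(bdS ∪ bdN)) where
  toFun c := ⟨bdMk 0 ![0, (c : ℂ).re, (c : ℂ).im], by
    rw [mem_bd_iff]
    have h : Complex.normSq (c : ℂ) = 1 := Circle.normSq_coe c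
    rw [Complex.normSq_apply] at h
    simp [bdMk]
    nlinarith⟩
  continuous_toFun := by
    refine Continuous.subtype_mk (continuous_bdMk continuous_const ?_) _
    refine continuous_pi fun j => ?_
    fin_cases j <;> simp <;> fun_prop

noncomputable def bdMid : C(↥(bdS ∪ bdN), ↥(bdS ∪ bdN)) where
  toFun z := ⟨bdMk 0 (fun j => (z.1 j).im), by
    rw [mem_bd_iff]
    have h := ((mem_bd_iff z.1).1 z.2).2.2.1
    simp [bdMk, h]⟩
  continuous_toFun := by
    refine Continuous.subtype_mk (continuous_bdMk continuous_const ?_) _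
    exact continuous_pi fun j => cont_bdIm continuous_id j

noncomputable def bdHom1 : ContinuousMap.Homotopy bdMid (ContinuousMap.id ↥(bdS ∪ bdN)) where
  toFun p := ⟨bdMk (fun j => (p.1 : ℝ) * (p.2.1 j).re) (fun j => (p.2.1 j).im), by
    rw [mem_bd_iff]
    obtain ⟨h1, h2, h3, h4⟩ := (mem_bd_iff p.2.1).1 p.2.2
    have ht := p.1.2.1
    simp only [bdMk]
    refine ⟨?_, by positivity, h3, ?_⟩
    · linear_combination (p.1 : ℝ) ^ 2 * h1
    · linear_combination (p.1 : ℝ) * h4⟩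
  continuous_toFun := by
    refine Continuous.subtype_mk (continuous_bdMk ?_ ?_) _
    · exact continuous_pi fun j =>
        (continuous_subtype_val.comp continuous_fst).mul (cont_bdRe continuous_snd j)
    · exact continuous_pi fun j => cont_bdIm continuous_snd j
  map_zero_left z := by
    apply Subtype.ext; funext j; simp [bdMk, bdMid]
  map_one_left z := by
    apply Subtype.ext; funext j; simp [bdMk]

noncomputable def bdS2 (t : ℝ) (z : Fin 3 → ℂ) : ℝ :=
  Real.sqrt (1 + (t * (z 0).im) ^ 2) / bdRad z

noncomputable def bdHom2 : ContinuousMap.Homotopy (circleToBd.comp bdToCircle) bdMid where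
  toFun p := ⟨bdMk 0 ![(p.1 : ℝ) * (p.2.1 0).im, bdS2 p.1 p.2.1 * (p.2.1 1).im,
      bdS2 p.1 p.2.1 * (p.2.1 2).im], by
    rw [mem_bd_iff]
    obtain ⟨h1, h2, h3, h4⟩ := (mem_bd_iff p.2.1).1 p.2.2
    have hr := bdRad_pos p.2.1
    have hs := bdRad_sq p.2.1
    have hq : bdS2 p.1 p.2.1 ^ 2 * bdRad p.2.1 ^ 2 = 1 + ((p.1 : ℝ) * (p.2.1 0).im) ^ 2 := by
      rw [bdS2, div_pow, Real.sq_sqrt (by positivity)]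
      field_simp
    simp [bdMk]
    linear_combination (-1) * hq + (bdS2 p.1 p.2.1 ^ 2) * (h3 + hs)⟩
  continuous_toFun := by
    have hI := fun j => cont_bdIm (X := unitInterval × ↥(bdS ∪ bdN)) continuous_snd j
    have hT : Continuous fun p : unitInterval × ↥(bdS ∪ bdN) => (p.1 : ℝ) :=
      continuous_subtype_val.comp continuous_fst
    have hS : Continuous fun p : unitInterval × ↥(bdS ∪ bdN) => bdS2 p.1 p.2.1 := by
      unfold bdS2
      refine Continuous.div
        (Real.continuous_sqrt.comp (continuous_const.add ((hT.mul (hI 0)).pow 2)))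
        (continuous_bdRad.comp (continuous_subtype_val.comp continuous_snd))
        (fun z => (bdRad_pos _).ne')
    refine Continuous.subtype_mk (continuous_bdMk continuous_const ?_) _
    refine continuous_pi fun j => ?_
    fin_cases j
    · exact hT.mul (hI 0)
    · exact hS.mul (hI 1)
    · exact hS.mul (hI 2)
  map_zero_left z := by
    apply Subtype.ext; funext j
    fin_cases j <;> simp [bdMk, circleToBd, bdToCircle_re, bdToCircle_im, bdS2] <;> ring
  map_one_left z := by
    have hr := bdRad_pos z.1
    have : bdS2 1 z.1 = 1 := by
      unfold bdS2; rw [one_mul]; exact div_self hr.ne'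
    apply Subtype.ext; funext j
    fin_cases j <;> simp [bdMk, bdMid, this]

noncomputable def bdEquivCircle : ContinuousMap.HomotopyEquiv ↥(bdS ∪ bdN) Circle where
  toFun := bdToCircle
  invFun := circleToBd
  left_inv := ⟨bdHom2.trans bdHom1⟩
  right_inv := by
    have : bdToCircle.comp circleToBd = ContinuousMap.id Circle := by
      ext c
      apply Complex.ext <;> simp [bdToCircle_re, bdToCircle_im, circleToBd, bdMk, bdRad]
    rw [this]

noncomputable def bdEquivAddCircle :
    ContinuousMap.HomotopyEquiv ↥(bdS ∪ bdN) (AddCircle (2 * Real.pi)) :=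
  bdEquivCircle.trans AddCircle.homeomorphCircle'.symm.toHomotopyEquiv

lemma addCircle_fg (x : AddCircle (2 * Real.pi)) :
    Nonempty (FundamentalGroup (AddCircle (2 * Real.pi)) x ≃* Multiplicative ℤ) := by
  obtain ⟨e, he⟩ := QuotientAddGroup.mk_surjective x
  have hp := AddCircle.isAddQuotientCoveringMap_coe (2 * Real.pi)
  have E1 := hp.fundamentalGroupEquiv (x := x) ⟨e, he⟩
  have hinj : Function.Injective (zmultiplesHom ℝ (2 * Real.pi)) := by
    intro a b h
    simpa [Real.pi_ne_zero] using h
  have E2 : ℤ ≃+ AddSubgroup.zmultiples (2 * Real.pi) :=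
    AddMonoidHom.ofInjective hinj
  have E3 : (Multiplicative (AddSubgroup.zmultiples (2 * Real.pi)))ᵐᵒᵖ ≃*
      Multiplicative (AddSubgroup.zmultiples (2 * Real.pi)) := MulOpposite.opMulEquiv.symm
  exact ⟨E1.trans (E3.trans E2.symm.toMultiplicative)⟩

/-- the fundamental group of the full boundary `∂Ξ = ∂ₛΞ ∪ ∂ₙΞ` of the
crown of `SO_e(1,2)/SO(2)` (with the subspace topology of `ℂ³`, based at `z₁`) is
isomorphic to `ℤ`. -/
theorem stmt_6 :
    Nonempty (FundamentalGroup (↥(bdS ∪ bdN)) ⟨z1pt, z1pt_mem⟩ ≃* Multiplicative ℤ) := by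
  let F := FundamentalGroupoidFunctor.equivOfHomotopyEquiv
    (X := TopCat.of ↥(bdS ∪ bdN)) (Y := TopCat.of (AddCircle (2 * Real.pi))) bdEquivAddCircle
  obtain ⟨E⟩ := addCircle_fg (F.functor.obj (FundamentalGroupoid.mk ⟨z1pt, z1pt_mem⟩)).as
  have E' := F.fullyFaithfulFunctor.mulEquivEnd (FundamentalGroupoid.mk ⟨z1pt, z1pt_mem⟩)
  exact ⟨MulEquiv.trans E' E⟩
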